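/- arXiv:2602.10857 — 3 statements merged into one kernel-verified Lean document; each statement's English description precedes it below -/
import Mathlib

section
/- Given any b : ℕ → ℝ_{>0}, there exists c : ℕ → ℝ with c(0) = −b(0) and c(1) = 0 such that the function u defined for m ≥ 1, n ≥ 0 by u(m,n) = b(0)·∏_{k=1}^{n} (b(m+k−1)/b(n−k)) + ∑_{ℓ=0}^{n−1} (c(m+ℓ) − c(n−ℓ))·∏_{k=1}^{ℓ} (b(m+k−1)/b(n−k)) (and u(0,n) = 0) satisfies u(m,n) > 0 for all m ≥ 1, n ≥ 0, and the stationary distribution corresponding to u in the homogeneous PALRMP (for any fixed q ≥ 0, q ≠ 1) is factorised with one-point function f(n) = ∏_{i=1}^{n} b(i−1). -/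
open scoped Classical

namespace LRMP

/-- A rate function: `u m n` is positive when the departure site is occupied
(`m ≥ 1`) and zero when it is empty (`m = 0`). -/
def IsRate (u : ℕ → ℕ → ℝ) : Prop :=
  (∀ m n : ℕ, 1 ≤ m → 0 < u m n) ∧ ∀ n : ℕ, u 0 n = 0

/-- The configuration `η^{k,ℓ}`: one particle moved from site `k` to site `ℓ`. -/
def move (L : ℕ) (η : ZMod L → ℕ) (k ℓ : ZMod L) : ZMod L → ℕ :=
  fun a => if a = k then η a - 1 else if a = ℓ then η a + 1 else η a

/-- Every site strictly between `k` and `ℓ`, moving clockwise from `k`, is empty in `η`. -/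
def RightClear (L : ℕ) (η : ZMod L → ℕ) (k ℓ : ZMod L) : Prop :=
  ∀ i : ℕ, 0 < i → i < (ℓ - k).val → η (k + (i : ZMod L)) = 0

/-- Every site strictly between `k` and `ℓ`, moving counterclockwise from `k`, is empty in `η`. -/
def LeftClear (L : ℕ) (η : ZMod L → ℕ) (k ℓ : ZMod L) : Prop :=
  ∀ i : ℕ, 0 < i → i < (k - ℓ).val → η (k - (i : ZMod L)) = 0

/-- The total rate of the transition `η → η^{k,ℓ}` in the PALRMP with rate function `u`,
rate parameters `x` and asymmetry parameter `q`: a clockwise (right) hop contributes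
`x ℓ * u (η k) (η ℓ)` and a counterclockwise (left) hop contributes `q * x ℓ * u (η k) (η ℓ)`. -/
noncomputable def hopRate (L : ℕ) (u : ℕ → ℕ → ℝ) (x : ZMod L → ℝ) (q : ℝ)
    (η : ZMod L → ℕ) (k ℓ : ZMod L) : ℝ :=
  (if k ≠ ℓ ∧ 1 ≤ η k ∧ RightClear L η k ℓ then x ℓ * u (η k) (η ℓ) else 0) +
  (if k ≠ ℓ ∧ 1 ≤ η k ∧ LeftClear L η k ℓ then q * (x ℓ * u (η k) (η ℓ)) else 0)

/-- The incoming probability current into `η`: the sum over pairs `(k, ℓ)` of the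
probability current due to the transition into `η` in which a particle moves from
site `k` to site `ℓ` (coming from the configuration `η^{ℓ,k} = move L η ℓ k`). -/
noncomputable def inflow (L : ℕ) [NeZero L] (u : ℕ → ℕ → ℝ) (x : ZMod L → ℝ) (q : ℝ)
    (π : (ZMod L → ℕ) → ℝ) (η : ZMod L → ℕ) : ℝ :=
  ∑ k : ZMod L, ∑ ℓ : ZMod L,
    if 1 ≤ η ℓ then π (move L η ℓ k) * hopRate L u x q (move L η ℓ k) k ℓ else 0

/-- The outgoing probability current out of `η`. -/
noncomputable def outflow (L : ℕ) [NeZero L] (u : ℕ → ℕ → ℝ) (x : ZMod L → ℝ) (q : ℝ)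
    (π : (ZMod L → ℕ) → ℝ) (η : ZMod L → ℕ) : ℝ :=
  ∑ k : ZMod L, ∑ ℓ : ZMod L, π η * hopRate L u x q η k ℓ

/-- `π` satisfies the master (balance) equation of the PALRMP on `Ω_{L,N}`:
for every configuration `η` with `N` particles, the incoming probability current
equals the outgoing probability current. -/
def IsStationary (L : ℕ) [NeZero L] (N : ℕ) (u : ℕ → ℕ → ℝ) (x : ZMod L → ℝ) (q : ℝ)
    (π : (ZMod L → ℕ) → ℝ) : Prop :=
  ∀ η : ZMod L → ℕ, (∑ a, η a) = N → inflow L u x q π η = outflow L u x q π η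

/-- The stationary distribution corresponding to the rate `u` in the PALRMP with
asymmetry parameter `q` is factorised, with one-point function `f`: for every
`L ≥ 2`, `N ≥ 1` and all positive rate parameters `x`, the factorised distribution
`η ↦ ∏_ℓ f (x ℓ) (η ℓ)` (up to normalisation) is stationary. -/
def FactorisedPALRMP (u : ℕ → ℕ → ℝ) (q : ℝ) (f : ℝ → ℕ → ℝ) : Prop :=
  (∀ (x : ℝ) (n : ℕ), 0 < x → 0 < f x n) ∧
  ∀ (L N : ℕ) [NeZero L], 2 ≤ L → 1 ≤ N →
    ∀ x : ZMod L → ℝ, (∀ ℓ, 0 < x ℓ) →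
      IsStationary L N u x q (fun η => ∏ ℓ, f (x ℓ) (η ℓ))

/-- The stationary distribution corresponding to the rate `u` in the homogeneous
PALRMP (all rate parameters equal to `1`) with asymmetry parameter `q` is factorised,
with one-point function `f`. -/
def FactorisedHomog (u : ℕ → ℕ → ℝ) (q : ℝ) (f : ℕ → ℝ) : Prop :=
  (∀ n : ℕ, 0 < f n) ∧
  ∀ (L N : ℕ) [NeZero L], 2 ≤ L → 1 ≤ N →
    IsStationary L N u (fun _ => (1 : ℝ)) q (fun η => ∏ ℓ, f (η ℓ))

end LRMP

namespace LRMP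

/-!
Choose `c` to vanish on the positive integers. The sum in the formula for `u` then disappears, and
the remaining product rearranges to `u m n = b 0 * f (m + n) / (f m * f n)`, where `f` is the
one-point function. Hence the stationary weight times the rate of a hop from `k` to `ℓ` depends on
`η k` and `η ℓ` only through their sum: it is the same before and after the hop, and symmetric in
the two sites.

Reversing the roles of `k` and `ℓ` therefore matches the clockwise current into `η` with the
clockwise current out of `η` on all pairs of occupied sites. In the remaining terms one of the two
sites is empty and the other is the nearest occupied site on one of its sides; such a term depends
on the empty site alone, and each empty site occurs exactly once as the origin of an incoming hop
and exactly once as the destination of an outgoing one. So the clockwise currents balance, and the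
counterclockwise currents are the same two numbers exchanged, multiplied by `q`.
-/

section Sums

variable {ι M : Type*} [Fintype ι] [AddCommMonoid M]

lemma sum_ite_eq_of_existsUnique {p : ι → Prop} [DecidablePred p] {g : ι → M} {x : M}
    (h : ∃! i, p i) (hg : ∀ i, p i → g i = x) : ∑ i, (if p i then g i else 0) = x := by
  obtain ⟨i, hi, huniq⟩ := h
  rw [Fintype.sum_eq_single i fun j hj => if_neg fun hpj => hj (huniq j hpj), if_pos hi, hg i hi]

lemma sum_sum_ite_target_eq_source {P : ι → Prop} {R : ι → ι → Prop} [DecidablePred P]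
    [DecidableRel R] {T : ι → ι → M}
    (h : ∀ k, ¬ P k → ∑ ℓ, (if P ℓ ∧ R k ℓ then T k ℓ else 0) =
      ∑ ℓ, (if P ℓ ∧ R ℓ k then T ℓ k else 0)) :
    ∑ k, ∑ ℓ, (if P ℓ ∧ R k ℓ then T k ℓ else 0) =
      ∑ k, ∑ ℓ, (if P k ∧ R k ℓ then T k ℓ else 0) := by
  have hboth : ∑ k with P k, ∑ ℓ, (if P ℓ ∧ R k ℓ then T k ℓ else 0) =
      ∑ k with P k, ∑ ℓ, (if P ℓ ∧ R ℓ k then T ℓ k else 0) := by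
    simp only [ite_and, ← Finset.sum_filter P]
    exact Finset.sum_comm
  have hnot : ∑ k with ¬ P k, ∑ ℓ, (if P ℓ ∧ R k ℓ then T k ℓ else 0) =
      ∑ k with ¬ P k, ∑ ℓ, (if P ℓ ∧ R ℓ k then T ℓ k else 0) :=
    Finset.sum_congr rfl fun k hk => h k (Finset.mem_filter.mp hk).2
  calc ∑ k, ∑ ℓ, (if P ℓ ∧ R k ℓ then T k ℓ else 0)
      = ∑ k, ∑ ℓ, (if P ℓ ∧ R ℓ k then T ℓ k else 0) := by
        rw [← Finset.sum_filter_add_sum_filter_not _ P, hboth, hnot,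
          Finset.sum_filter_add_sum_filter_not]
    _ = ∑ k, ∑ ℓ, (if P k ∧ R k ℓ then T k ℓ else 0) := Finset.sum_comm

end Sums

section Reach

variable {L : ℕ}

lemma move_source {η : ZMod L → ℕ} {k ℓ : ZMod L} : move L η k ℓ k = η k - 1 := by
  simp [move]

lemma move_target {η : ZMod L → ℕ} {k ℓ : ZMod L} (h : k ≠ ℓ) : move L η k ℓ ℓ = η ℓ + 1 := by
  simp [move, h.symm]

lemma move_of_ne {η : ZMod L → ℕ} {k ℓ s : ZMod L} (hk : s ≠ k) (hℓ : s ≠ ℓ) :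
    move L η k ℓ s = η s := by
  simp [move, hk, hℓ]

/-- The site `ℓ ≠ k` is the first occupied site clockwise from `k`, or comes before it: the
geometric condition for a clockwise hop from `k` to `ℓ`. -/
def RightReach (L : ℕ) (η : ZMod L → ℕ) (k ℓ : ZMod L) : Prop :=
  k ≠ ℓ ∧ RightClear L η k ℓ

variable [NeZero L]

lemma leftClear_iff_rightClear {η : ZMod L → ℕ} {k ℓ : ZMod L} :
    LeftClear L η k ℓ ↔ RightClear L η ℓ k := by
  have hright : ∀ i < (k - ℓ).val, k - (((k - ℓ).val - i : ℕ) : ZMod L) = ℓ + (i : ZMod L) := by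
    intro i hi
    rw [Nat.cast_sub hi.le, ZMod.natCast_zmod_val]
    ring
  have hleft : ∀ i < (k - ℓ).val, ℓ + (((k - ℓ).val - i : ℕ) : ZMod L) = k - (i : ZMod L) := by
    intro i hi
    rw [Nat.cast_sub hi.le, ZMod.natCast_zmod_val]
    ring
  constructor
  · intro h i hi₀ hi
    rw [← hright i hi]
    exact h _ (by omega) (by omega)
  · intro h i hi₀ hi
    rw [← hleft i hi]
    exact h _ (by omega) (by omega)

lemma ne_endpoints_of_lt_val_sub {k ℓ : ZMod L} {i : ℕ} (hi₀ : 0 < i) (hi : i < (ℓ - k).val) :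
    k + (i : ZMod L) ≠ k ∧ k + (i : ZMod L) ≠ ℓ := by
  have hval : (i : ZMod L).val = i := ZMod.val_cast_of_lt (hi.trans (ZMod.val_lt _))
  constructor
  · intro h
    rw [add_eq_left.mp h, ZMod.val_zero] at hval
    omega
  · intro h
    rw [eq_sub_of_add_eq' h] at hval
    omega

lemma rightReach_congr {η ζ : ZMod L → ℕ} {k ℓ : ZMod L}
    (h : ∀ s, s ≠ k → s ≠ ℓ → η s = ζ s) : RightReach L η k ℓ ↔ RightReach L ζ k ℓ := by
  refine and_congr_right fun _ =>
    forall_congr' fun i => forall_congr' fun hi₀ => forall_congr' fun hi => ?_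
  obtain ⟨hk, hℓ⟩ := ne_endpoints_of_lt_val_sub hi₀ hi
  rw [h _ hk hℓ]

lemma rightReach_comp_neg {η : ZMod L → ℕ} {k ℓ : ZMod L} :
    RightReach L (fun s => η (-s)) k ℓ ↔ RightReach L η (-ℓ) (-k) := by
  have hclear : RightClear L (fun s => η (-s)) k ℓ ↔ LeftClear L η (-k) (-ℓ) := by
    simp only [RightClear, LeftClear, neg_add', neg_sub_neg]
  rw [RightReach, RightReach, hclear, leftClear_iff_rightClear, ne_eq, ne_eq, neg_inj, eq_comm]

lemma existsUnique_occupied_rightReach {η : ZMod L → ℕ} (hη : ∃ s, 1 ≤ η s) {k : ZMod L}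
    (hk : η k = 0) : ∃! ℓ, 1 ≤ η ℓ ∧ RightReach L η k ℓ := by
  obtain ⟨s, hs⟩ := hη
  have hex : ∃ i : ℕ, 1 ≤ η (k + (i : ZMod L)) := ⟨(s - k).val, by simpa using hs⟩
  have hfind_le : ∀ t, 1 ≤ η t → Nat.find hex ≤ (t - k).val := fun t ht =>
    Nat.find_min' hex (by simpa using ht)
  have hfind_lt : Nat.find hex < L := (hfind_le s hs).trans_lt (ZMod.val_lt _)
  refine ⟨k + (Nat.find hex : ZMod L), ⟨Nat.find_spec hex, ?_, ?_⟩, ?_⟩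
  · intro h
    have := Nat.find_spec hex
    rw [← h] at this
    omega
  · intro i _ hi
    rw [add_sub_cancel_left, ZMod.val_cast_of_lt hfind_lt] at hi
    have := Nat.find_min hex hi
    omega
  · rintro ℓ ⟨hℓ, -, hclear⟩
    have hpos : 0 < Nat.find hex := by simp [hk]
    rcases (hfind_le ℓ hℓ).lt_or_eq with hlt | heq
    · have := hclear _ hpos hlt
      have := Nat.find_spec hex
      omega
    · rw [heq, ZMod.natCast_zmod_val, add_sub_cancel]

lemma existsUnique_occupied_rightReach_to {η : ZMod L → ℕ} (hη : ∃ s, 1 ≤ η s) {ℓ : ZMod L}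
    (hℓ : η ℓ = 0) : ∃! k, 1 ≤ η k ∧ RightReach L η k ℓ := by
  obtain ⟨s, hs⟩ := hη
  have hreflected := existsUnique_occupied_rightReach (η := fun s => η (-s)) (k := -ℓ)
    ⟨-s, by rwa [neg_neg]⟩ (by rwa [neg_neg])
  simp only [rightReach_comp_neg, neg_neg] at hreflected
  exact ((Equiv.neg (ZMod L)).existsUnique_congr fun _ => Iff.rfl).mp hreflected

end Reach

section PairCurrent

variable {V : Type*} [Fintype V] [DecidableEq V] {a : ℝ} {f : ℕ → ℝ} {η : V → ℕ} {k ℓ : V}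

/-- The rate proportional to `f (m + n) / (f m * f n)`, for which the product weight of `f` times
the rate of a hop depends on the two occupation numbers only through their sum. -/
noncomputable def mergeRate (a : ℝ) (f : ℕ → ℝ) (m n : ℕ) : ℝ :=
  if m = 0 then 0 else a * f (m + n) / (f m * f n)

lemma isRate_mergeRate (ha : 0 < a) (hf : ∀ n, 0 < f n) : IsRate (mergeRate a f) := by
  refine ⟨fun m n hm => ?_, fun n => if_pos rfl⟩
  rw [mergeRate, if_neg (by omega)]
  exact div_pos (mul_pos ha (hf _)) (mul_pos (hf m) (hf n))

/-- The probability current carried by a hop between the sites `k` and `ℓ` under `mergeRate a f`: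
the product weight of `f` with the factors at `k` and `ℓ` merged. -/
noncomputable def pairCurrent (a : ℝ) (f : ℕ → ℝ) (η : V → ℕ) (k ℓ : V) : ℝ :=
  a * f (η k + η ℓ) * ∏ s ∈ {k, ℓ}ᶜ, f (η s)

lemma pairCurrent_comm : pairCurrent a f η k ℓ = pairCurrent a f η ℓ k := by
  rw [pairCurrent, pairCurrent, add_comm, Finset.pair_comm]

lemma pairCurrent_congr {ζ : V → ℕ} (hadd : η k + η ℓ = ζ k + ζ ℓ)
    (h : ∀ s, s ≠ k → s ≠ ℓ → η s = ζ s) : pairCurrent a f η k ℓ = pairCurrent a f ζ k ℓ := by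
  rw [pairCurrent, pairCurrent, hadd]
  congr 1
  refine Finset.prod_congr rfl fun s hs => ?_
  simp only [Finset.mem_compl, Finset.mem_insert, Finset.mem_singleton, not_or] at hs
  rw [h s hs.1 hs.2]

lemma pairCurrent_of_eq_zero (hne : k ≠ ℓ) (hk : η k = 0) :
    pairCurrent a f η k ℓ = a * ∏ s ∈ {k}ᶜ, f (η s) := by
  have hmem : ℓ ∈ ({k}ᶜ : Finset V) := by simpa using hne.symm
  have herase : ({k, ℓ}ᶜ : Finset V) = ({k}ᶜ : Finset V).erase ℓ := by
    rw [Finset.pair_comm, Finset.compl_insert]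
  rw [pairCurrent, hk, zero_add, herase, mul_assoc,
    Finset.mul_prod_erase _ (fun s => f (η s)) hmem]

lemma prod_mul_mergeRate (hf : ∀ n, f n ≠ 0) (hne : k ≠ ℓ) (hk : 1 ≤ η k) :
    (∏ s, f (η s)) * mergeRate a f (η k) (η ℓ) = pairCurrent a f η k ℓ := by
  have hk' := hf (η k)
  have hℓ' := hf (η ℓ)
  rw [← Finset.prod_mul_prod_compl {k, ℓ}, Finset.prod_pair hne, mergeRate, if_neg (by omega),
    pairCurrent]
  field_simp

end PairCurrent

section Balance

variable {L : ℕ} [NeZero L] {a q : ℝ} {f : ℕ → ℝ} {η : ZMod L → ℕ}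

/-- The total current out of `η` due to clockwise hops, under `mergeRate a f`. -/
noncomputable def clockwiseOutflow (L : ℕ) [NeZero L] (a : ℝ) (f : ℕ → ℝ) (η : ZMod L → ℕ) : ℝ :=
  ∑ k, ∑ ℓ, if 1 ≤ η k ∧ RightReach L η k ℓ then pairCurrent a f η k ℓ else 0

/-- The total current into `η` due to clockwise hops, under `mergeRate a f`; the pair `(k, ℓ)`
stands for the hop from `k` to `ℓ` that ends in `η`. -/
noncomputable def clockwiseInflow (L : ℕ) [NeZero L] (a : ℝ) (f : ℕ → ℝ) (η : ZMod L → ℕ) : ℝ :=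
  ∑ k, ∑ ℓ, if 1 ≤ η ℓ ∧ RightReach L η k ℓ then pairCurrent a f η k ℓ else 0

lemma clockwiseInflow_eq_clockwiseOutflow (hη : ∃ s, 1 ≤ η s) :
    clockwiseInflow L a f η = clockwiseOutflow L a f η := by
  refine sum_sum_ite_target_eq_source (P := fun s => 1 ≤ η s) fun k hk => ?_
  have hk₀ : η k = 0 := by omega
  trans a * ∏ s ∈ {k}ᶜ, f (η s)
  · exact sum_ite_eq_of_existsUnique (existsUnique_occupied_rightReach hη hk₀)
      fun ℓ hℓ => pairCurrent_of_eq_zero hℓ.2.1 hk₀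
  · exact (sum_ite_eq_of_existsUnique (existsUnique_occupied_rightReach_to hη hk₀)
      fun ℓ hℓ => pairCurrent_comm.trans (pairCurrent_of_eq_zero hℓ.2.1.symm hk₀)).symm

lemma prod_mul_hopRate (hf : ∀ n, f n ≠ 0) (k ℓ : ZMod L) :
    (∏ s, f (η s)) * hopRate L (mergeRate a f) (fun _ => 1) q η k ℓ =
      (if 1 ≤ η k ∧ RightReach L η k ℓ then pairCurrent a f η k ℓ else 0) +
        q * (if 1 ≤ η k ∧ RightReach L η ℓ k then pairCurrent a f η k ℓ else 0) := by
  by_cases h : k ≠ ℓ ∧ 1 ≤ η k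
  · simp only [hopRate, RightReach, leftClear_iff_rightClear, h.1, h.1.symm, h.2, ne_eq,
      not_false_eq_true, true_and, one_mul, ← prod_mul_mergeRate hf h.1 h.2]
    split_ifs <;> ring
  · have hzero : hopRate L (mergeRate a f) (fun _ => 1) q η k ℓ = 0 := by
      rw [hopRate, if_neg (by tauto), if_neg (by tauto), add_zero]
    rw [hzero, if_neg (by unfold RightReach; tauto),
      if_neg (by unfold RightReach; rw [ne_comm]; tauto), mul_zero, mul_zero, add_zero]

lemma prod_move_mul_hopRate (hf : ∀ n, f n ≠ 0) {k ℓ : ZMod L} (hℓ : 1 ≤ η ℓ) :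
    (∏ s, f (move L η ℓ k s)) *
        hopRate L (mergeRate a f) (fun _ => 1) q (move L η ℓ k) k ℓ =
      (if RightReach L η k ℓ then pairCurrent a f η k ℓ else 0) +
        q * (if RightReach L η ℓ k then pairCurrent a f η k ℓ else 0) := by
  rw [prod_mul_hopRate hf]
  by_cases hne : k = ℓ
  · simp [hne, RightReach]
  have hoff : ∀ s, s ≠ k → s ≠ ℓ → move L η ℓ k s = η s := fun s hk hℓ => move_of_ne hℓ hk
  have hsource : move L η ℓ k k = η k + 1 := move_target (Ne.symm hne)
  have hcurrent : pairCurrent a f (move L η ℓ k) k ℓ = pairCurrent a f η k ℓ :=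
    pairCurrent_congr (by rw [hsource, move_source]; omega) hoff
  have hoccupied : 1 ≤ move L η ℓ k k := by omega
  simp only [hoccupied, true_and, hcurrent, rightReach_congr hoff,
    rightReach_congr fun s hℓ hk => hoff s hk hℓ]

lemma outflow_eq_clockwise (hf : ∀ n, f n ≠ 0) :
    outflow L (mergeRate a f) (fun _ => 1) q (fun η => ∏ s, f (η s)) η =
      clockwiseOutflow L a f η + q * clockwiseInflow L a f η := by
  have hswap : clockwiseInflow L a f η =
      ∑ k, ∑ ℓ, if 1 ≤ η k ∧ RightReach L η ℓ k then pairCurrent a f η k ℓ else 0 := by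
    rw [clockwiseInflow, Finset.sum_comm]
    simp only [pairCurrent_comm]
  simp only [outflow, prod_mul_hopRate hf, hswap, clockwiseOutflow, Finset.sum_add_distrib,
    Finset.mul_sum]

lemma inflow_eq_clockwise (hf : ∀ n, f n ≠ 0) :
    inflow L (mergeRate a f) (fun _ => 1) q (fun η => ∏ s, f (η s)) η =
      clockwiseInflow L a f η + q * clockwiseOutflow L a f η := by
  have hswap : clockwiseOutflow L a f η =
      ∑ k, ∑ ℓ, if 1 ≤ η ℓ ∧ RightReach L η ℓ k then pairCurrent a f η k ℓ else 0 := by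
    rw [clockwiseOutflow, Finset.sum_comm]
    simp only [pairCurrent_comm]
  simp only [inflow, hswap, clockwiseInflow, Finset.mul_sum, ← Finset.sum_add_distrib]
  refine Finset.sum_congr rfl fun k _ => Finset.sum_congr rfl fun ℓ _ => ?_
  by_cases hℓ : 1 ≤ η ℓ
  · simp only [hℓ, if_true, true_and, prod_move_mul_hopRate hf hℓ]
  · simp only [hℓ, if_false, false_and, mul_zero, add_zero]

theorem factorisedHomog_mergeRate (a q : ℝ) (hf : ∀ n, 0 < f n) :
    FactorisedHomog (mergeRate a f) q f := by
  refine ⟨hf, fun L N _ _ hN η hη => ?_⟩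
  have hoccupied : ∃ s, 1 ≤ η s := by
    obtain ⟨s, -, hs⟩ := Finset.exists_ne_zero_of_sum_ne_zero (by omega : ∑ s, η s ≠ 0)
    exact ⟨s, Nat.one_le_iff_ne_zero.mpr hs⟩
  have hf₀ : ∀ n, f n ≠ 0 := fun n => (hf n).ne'
  rw [inflow_eq_clockwise hf₀, outflow_eq_clockwise hf₀,
    clockwiseInflow_eq_clockwiseOutflow hoccupied]

end Balance

lemma prod_Icc_div_eq_prod_range_div {G : Type*} [DivisionCommMonoid G] (b : ℕ → G)
    (m n : ℕ) :
    ∏ k ∈ Finset.Icc 1 n, b (m + k - 1) / b (n - k) =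
      (∏ i ∈ Finset.range n, b (m + i)) / ∏ i ∈ Finset.range n, b i := by
  rw [← Finset.prod_range_reflect b n, ← Finset.prod_div_distrib,
    ← Finset.Ico_add_one_right_eq_Icc, Finset.prod_Ico_eq_prod_range, Nat.add_sub_cancel]
  refine Finset.prod_congr rfl fun i _ => ?_
  rw [Nat.sub_sub, show m + (1 + i) - 1 = m + i by omega]

lemma mergeRate_prod_range {b : ℕ → ℝ} (hb : ∀ n, b n ≠ 0) (a : ℝ) {m : ℕ} (hm : 1 ≤ m) (n : ℕ) :
    mergeRate a (fun n => ∏ i ∈ Finset.range n, b i) m n =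
      a * ∏ k ∈ Finset.Icc 1 n, b (m + k - 1) / b (n - k) := by
  have hprod : ∏ i ∈ Finset.range m, b i ≠ 0 := Finset.prod_ne_zero_iff.mpr fun i _ => hb i
  rw [mergeRate, if_neg (by omega), prod_Icc_div_eq_prod_range_div, Finset.prod_range_add,
    mul_left_comm, mul_div_mul_left _ _ hprod, mul_div_assoc]

theorem exists_c_for_arbitrary_b_general (b : ℕ → ℝ) (hb : ∀ n, 0 < b n) :
    ∃ c : ℕ → ℝ, c 0 = -b 0 ∧ c 1 = 0 ∧
      ∃ u : ℕ → ℕ → ℝ,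
        (∀ n : ℕ, u 0 n = 0) ∧
        (∀ m n : ℕ, 1 ≤ m →
          u m n = b 0 * (∏ k ∈ Finset.Icc 1 n, b (m + k - 1) / b (n - k))
            + ∑ ℓ ∈ Finset.range n,
                (c (m + ℓ) - c (n - ℓ)) * ∏ k ∈ Finset.Icc 1 ℓ, b (m + k - 1) / b (n - k)) ∧
        (∀ m n : ℕ, 1 ≤ m → 0 < u m n) ∧
        ∀ q : ℝ, FactorisedHomog u q (fun n => ∏ i ∈ Finset.range n, b i) := by
  have hf : ∀ n, 0 < ∏ i ∈ Finset.range n, b i := fun n => Finset.prod_pos fun i _ => hb i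
  obtain ⟨hpos, hzero⟩ := isRate_mergeRate (hb 0) hf
  refine ⟨Pi.single 0 (-b 0), Pi.single_eq_same _ _, Pi.single_eq_of_ne one_ne_zero _,
    mergeRate (b 0) fun n => ∏ i ∈ Finset.range n, b i, hzero, fun m n hm => ?_, hpos,
    fun q => factorisedHomog_mergeRate (b 0) q hf⟩
  rw [mergeRate_prod_range (fun n => (hb n).ne') _ hm, Finset.sum_eq_zero, add_zero]
  intro ℓ hℓ
  have hℓn : ℓ < n := Finset.mem_range.mp hℓ
  rw [Pi.single_eq_of_ne (by omega), Pi.single_eq_of_ne (by omega), sub_zero, zero_mul]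

/-- given any `b : ℕ → ℝ_{>0}` there is `c : ℕ → ℝ` with `c 0 = -b 0`,
`c 1 = 0`, such that the rate `u` defined by the displayed formula is positive for
`m ≥ 1` and the stationary distribution corresponding to `u` in the homogeneous PALRMP
(any `q ≥ 0`, `q ≠ 1`) is factorised with one-point function `f n = ∏_{i=1}^{n} b (i-1)`. -/
theorem exists_c_for_arbitrary_b (b : ℕ → ℝ) (hb : ∀ n, 0 < b n) :
    ∃ c : ℕ → ℝ, c 0 = -b 0 ∧ c 1 = 0 ∧
      ∃ u : ℕ → ℕ → ℝ,
        (∀ n : ℕ, u 0 n = 0) ∧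
        (∀ m n : ℕ, 1 ≤ m →
          u m n = b 0 * (∏ k ∈ Finset.Icc 1 n, b (m + k - 1) / b (n - k))
            + ∑ ℓ ∈ Finset.range n,
                (c (m + ℓ) - c (n - ℓ)) * ∏ k ∈ Finset.Icc 1 ℓ, b (m + k - 1) / b (n - k)) ∧
        (∀ m n : ℕ, 1 ≤ m → 0 < u m n) ∧
        ∀ q : ℝ, 0 ≤ q → q ≠ 1 →
          FactorisedHomog u q (fun n => ∏ i ∈ Finset.range n, b i) := by
  obtain ⟨c, hc₀, hc₁, u, hu₀, hu, hpos, hfact⟩ := exists_c_for_arbitrary_b_general b hb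
  exact ⟨c, hc₀, hc₁, u, hu₀, hu, hpos, fun q _ _ => hfact q⟩

end LRMP
end

section
/- Suppose the stationary distribution corresponding to the rate function u is factorised in the homogeneous SLRMP (q = 1, all rate parameters 1). Then there exists a one-point function f corresponding to u satisfying f(n) = f(0)·∏_{i=1}^{n} (u(1,i−1)/u(i,0)) for all n ∈ ℕ (equivalently, after rescaling, f(n) = ∏_{i=1}^{n} (u(1,i−1)/u(i,0))). -/
open scoped Classical

namespace LRMP

/-!
On two sites, the configuration with all `n + 1` particles on one site exchanges probability
only with the configuration having exactly one particle on the other site, so stationarity there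
is a detailed balance equation. For a factorised weight it is the recursion
`f (n + 1) = (f 1 / f 0) * (u 1 n / u (n + 1) 0) * f n`, which determines `f` up to a factor
`a * b ^ n`. As the number of particles is conserved, such a factor only multiplies the weight of
every configuration in `Ω_{L,N}` by the constant `a ^ L * b ^ N`, and it can be removed.
-/

section Conservation

variable {L : ℕ}

theorem move_add_single {η : ZMod L → ℕ} {k ℓ : ZMod L} (hkℓ : k ≠ ℓ) (hk : 1 ≤ η k) :
    move L η k ℓ + Pi.single k 1 = η + Pi.single ℓ 1 := by
  funext a
  simp only [move, Pi.add_apply, Pi.single_apply]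
  grind

variable [NeZero L]

theorem sum_move {η : ZMod L → ℕ} {k ℓ : ZMod L} (hkℓ : k ≠ ℓ) (hk : 1 ≤ η k) :
    ∑ a, move L η k ℓ a = ∑ a, η a := by
  have hsum := congrArg (fun ξ : ZMod L → ℕ => ∑ a, ξ a) (move_add_single hkℓ hk)
  simpa only [Pi.add_apply, Finset.sum_add_distrib, Finset.sum_pi_single', Finset.mem_univ,
    if_true, add_left_inj] using hsum

end Conservation

section Rescaling

variable {L N : ℕ} {u : ℕ → ℕ → ℝ} {x : ZMod L → ℝ} {q c : ℝ}
  {π π' : (ZMod L → ℕ) → ℝ} {η : ZMod L → ℕ}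

theorem hopRate_self (k : ZMod L) : hopRate L u x q η k k = 0 := by
  simp [hopRate]

theorem hopRate_of_eq_zero {k : ZMod L} (hk : η k = 0) (ℓ : ZMod L) :
    hopRate L u x q η k ℓ = 0 := by
  simp [hopRate, hk]

variable [NeZero L]

theorem inflow_eq_const_mul (hπ : ∀ ξ : ZMod L → ℕ, ∑ a, ξ a = N → π' ξ = c * π ξ)
    (hη : ∑ a, η a = N) : inflow L u x q π' η = c * inflow L u x q π η := by
  simp only [inflow, Finset.mul_sum]
  refine Finset.sum_congr rfl fun k _ => Finset.sum_congr rfl fun ℓ _ => ?_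
  rcases eq_or_ne ℓ k with rfl | hℓk
  · simp only [hopRate_self, mul_zero, ite_self]
  · split_ifs with hℓ
    · rw [hπ _ ((sum_move hℓk hℓ).trans hη), mul_assoc]
    · rw [mul_zero]

theorem outflow_eq_const_mul (hπ : π' η = c * π η) :
    outflow L u x q π' η = c * outflow L u x q π η := by
  simp only [outflow, Finset.mul_sum, hπ, mul_assoc]

theorem IsStationary.of_eq_const_mul (h : IsStationary L N u x q π)
    (hπ : ∀ ξ : ZMod L → ℕ, ∑ a, ξ a = N → π' ξ = c * π ξ) :
    IsStationary L N u x q π' := fun η hη => by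
  rw [inflow_eq_const_mul hπ hη, outflow_eq_const_mul (hπ η hη), h η hη]

theorem prod_mul_pow_mul {ι M : Type*} [Fintype ι] [CommMonoid M] (a b : M) (f : ℕ → M)
    (ξ : ι → ℕ) :
    ∏ i, a * b ^ ξ i * f (ξ i) = a ^ Fintype.card ι * b ^ (∑ i, ξ i) * ∏ i, f (ξ i) := by
  simp only [Finset.prod_mul_distrib, Finset.prod_const, Finset.card_univ,
    Finset.prod_pow_eq_pow_sum]

theorem FactorisedHomog.rescale {f : ℕ → ℝ} (h : FactorisedHomog u q f) {a b : ℝ}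
    (ha : 0 < a) (hb : 0 < b) : FactorisedHomog u q (fun n => a * b ^ n * f n) := by
  refine ⟨fun n => mul_pos (mul_pos ha (pow_pos hb n)) (h.1 n), fun L N _ hL hN => ?_⟩
  refine (h.2 L N hL hN).of_eq_const_mul (c := a ^ L * b ^ N) fun ξ hξ => ?_
  rw [prod_mul_pow_mul, ZMod.card, hξ]

end Rescaling

section TwoSites

variable {u : ℕ → ℕ → ℝ} {x : ZMod 2 → ℝ} {q : ℝ} {π : (ZMod 2 → ℕ) → ℝ}

/-- The configuration on two sites with `a` particles on site `0` and `b` particles on site `1`. -/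
def twoSite (a b : ℕ) : ZMod 2 → ℕ := fun k => if k = 0 then a else b

theorem twoSite_zero (a b : ℕ) : twoSite a b 0 = a := rfl

theorem twoSite_one (a b : ℕ) : twoSite a b 1 = b := rfl

theorem move_twoSite_one_zero (a b : ℕ) : move 2 (twoSite a (b + 1)) 1 0 = twoSite (a + 1) b := by
  funext k
  fin_cases k <;> rfl

@[to_additive]
theorem prod_zmod_two {M : Type*} [CommMonoid M] (F : ZMod 2 → M) : ∏ k, F k = F 0 * F 1 :=
  Fin.prod_univ_two F

theorem rightClear_two (η : ZMod 2 → ℕ) (k ℓ : ZMod 2) : RightClear 2 η k ℓ := by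
  intro i hi hiℓ
  have := ZMod.val_lt (ℓ - k)
  omega

theorem leftClear_two (η : ZMod 2 → ℕ) (k ℓ : ZMod 2) : LeftClear 2 η k ℓ := by
  intro i hi hiℓ
  have := ZMod.val_lt (k - ℓ)
  omega

-- On two sites both directions lead to the same target, hence the factor `1 + q`.
theorem hopRate_two {η : ZMod 2 → ℕ} {k ℓ : ZMod 2} (hkℓ : k ≠ ℓ) (hk : 1 ≤ η k) :
    hopRate 2 u x q η k ℓ = (1 + q) * (x ℓ * u (η k) (η ℓ)) := by
  simp only [hopRate, hkℓ, hk, rightClear_two, leftClear_two, ne_eq, not_false_eq_true,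
    and_self, if_true]
  ring

theorem inflow_twoSite_zero_succ (n : ℕ) :
    inflow 2 u x q π (twoSite 0 (n + 1)) = (1 + q) * (π (twoSite 1 n) * (x 1 * u 1 n)) := by
  have hhop : hopRate 2 u x q (twoSite 1 n) 0 1 = (1 + q) * (x 1 * u 1 n) :=
    hopRate_two zero_ne_one le_rfl
  have h0 : ¬ 1 ≤ twoSite 0 (n + 1) 0 := Nat.not_succ_le_zero 0
  have h1 : 1 ≤ twoSite 0 (n + 1) 1 := Nat.le_add_left 1 n
  simp only [inflow, sum_zmod_two, if_neg h0, if_pos h1, move_twoSite_one_zero, hhop,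
    hopRate_self]
  ring

theorem outflow_twoSite_zero_succ (n : ℕ) :
    outflow 2 u x q π (twoSite 0 (n + 1)) =
      (1 + q) * (π (twoSite 0 (n + 1)) * (x 0 * u (n + 1) 0)) := by
  have hempty : hopRate 2 u x q (twoSite 0 (n + 1)) 0 1 = 0 := hopRate_of_eq_zero rfl 1
  have hhop : hopRate 2 u x q (twoSite 0 (n + 1)) 1 0 = (1 + q) * (x 0 * u (n + 1) 0) :=
    hopRate_two one_ne_zero (Nat.le_add_left 1 n)
  simp only [outflow, sum_zmod_two, hempty, hhop, hopRate_self]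
  ring

theorem IsStationary.twoSite_detailed_balance {n : ℕ} (hq : 1 + q ≠ 0)
    (h : IsStationary 2 (n + 1) u x q π) :
    π (twoSite 1 n) * (x 1 * u 1 n) = π (twoSite 0 (n + 1)) * (x 0 * u (n + 1) 0) := by
  have hbalance := h (twoSite 0 (n + 1)) ((sum_zmod_two _).trans (zero_add (n + 1)))
  rw [inflow_twoSite_zero_succ, outflow_twoSite_zero_succ] at hbalance
  exact mul_left_cancel₀ hq hbalance

end TwoSites

section OnePointFunction

variable {u : ℕ → ℕ → ℝ} {q : ℝ} {f : ℕ → ℝ}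

theorem FactorisedHomog.detailed_balance (hq : 1 + q ≠ 0) (h : FactorisedHomog u q f) (n : ℕ) :
    f 1 * f n * u 1 n = f 0 * f (n + 1) * u (n + 1) 0 := by
  simpa only [prod_zmod_two, twoSite_zero, twoSite_one, one_mul] using
    (h.2 2 (n + 1) le_rfl n.succ_pos).twoSite_detailed_balance hq

theorem FactorisedHomog.eq_mul_pow_mul_prod (hq : 1 + q ≠ 0) (hu : ∀ n, u (n + 1) 0 ≠ 0)
    (h : FactorisedHomog u q f) (n : ℕ) :
    f n = f 0 * (f 1 / f 0) ^ n * ∏ i ∈ Finset.range n, u 1 i / u (i + 1) 0 := by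
  have h0 : f 0 ≠ 0 := (h.1 0).ne'
  induction n with
  | zero => simp
  | succ n ih =>
    have hstep : f (n + 1) = f 1 / f 0 * (u 1 n / u (n + 1) 0) * f n := by
      have hbalance := h.detailed_balance hq n
      have hun := hu n
      field_simp
      linarith
    rw [hstep, ih, Finset.prod_range_succ, pow_succ]
    ring

theorem FactorisedHomog.prod_div (hq : 1 + q ≠ 0) (hu : ∀ n, u (n + 1) 0 ≠ 0)
    (h : FactorisedHomog u q f) :
    FactorisedHomog u q (fun n => ∏ i ∈ Finset.range n, u 1 i / u (i + 1) 0) := by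
  have h0 := h.1 0
  have h1 := h.1 1
  convert h.rescale (inv_pos.mpr h0) (div_pos h0 h1) using 2 with n
  rw [h.eq_mul_pow_mul_prod hq hu n, ← inv_div (f 1) (f 0), inv_pow]
  field_simp

end OnePointFunction

theorem hslrmp_onepoint_form_general {u : ℕ → ℕ → ℝ} {q : ℝ} (hq : 1 + q ≠ 0)
    (hu : ∀ n, u (n + 1) 0 ≠ 0) (h : ∃ f : ℕ → ℝ, FactorisedHomog u q f) :
    (∃ f : ℕ → ℝ, FactorisedHomog u q f ∧
      ∀ n : ℕ, f n = f 0 * ∏ i ∈ Finset.range n, u 1 i / u (i + 1) 0) ∧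
    FactorisedHomog u q (fun n => ∏ i ∈ Finset.range n, u 1 i / u (i + 1) 0) := by
  obtain ⟨f, hf⟩ := h
  have hprod := hf.prod_div hq hu
  exact ⟨⟨_, hprod, fun n => by rw [Finset.prod_range_zero, one_mul]⟩, hprod⟩

/-- if the stationary distribution corresponding to `u` is factorised in
the homogeneous SLRMP (`q = 1`), then there is a one-point function `f` for `u` with
`f n = f 0 * ∏_{i=1}^{n} (u (1, i-1) / u (i, 0))`; equivalently, after rescaling,
`f n = ∏_{i=1}^{n} (u (1, i-1) / u (i, 0))` is a one-point function. -/
theorem hslrmp_onepoint_form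
    (u : ℕ → ℕ → ℝ) (hu : IsRate u)
    (h : ∃ f : ℕ → ℝ, FactorisedHomog u 1 f) :
    (∃ f : ℕ → ℝ, FactorisedHomog u 1 f ∧
      ∀ n : ℕ, f n = f 0 * ∏ i ∈ Finset.range n, u 1 i / u (i + 1) 0) ∧
    FactorisedHomog u 1 (fun n => ∏ i ∈ Finset.range n, u 1 i / u (i + 1) 0) :=
  hslrmp_onepoint_form_general (by norm_num) (fun n => (hu.1 (n + 1) 0 n.succ_pos).ne') h

end LRMP
end

section
/- Let φ, ψ : ℕ → ℝ with φ(0) = 0, φ(m) > 0 for m ≥ 1, and ψ(n) > 0 for all n ≥ 0, and define u(m,n) = φ(m)·ψ(n). Then u satisfies u(m,n)/(u(m,0)·u(1,n)) = u(n+1,m−1)/(u(n+1,0)·u(1,m−1)) for all m, n ≥ 1; consequently the stationary distribution corresponding to u in the homogeneous SLRMP (q = 1) is factorised, with one-point function f(n) = ∏_{i=1}^{n} (ψ(i−1)/φ(i)). -/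
open scoped Classical

namespace LRMP

/-!
At `q = 1` a hop from `k` to `ℓ` across an empty arc is undone by a hop from `ℓ` to `k` across the
same arc, so a product weight is stationary as soon as it balances each pair of opposite hops. When
`f (n + 1) * u (n + 1) 0 = c * (f n * u 1 n)`, this pairwise balance is the Cocozza condition with
its denominators cleared; the constant `c` is free because `f n` and `f n * c ^ n` define the same
distribution on configurations with a given number of particles. An arrival-site parameter `x ℓ` in
the rate is absorbed by the factor `x ℓ ^ η ℓ` of the weight.
-/

section Hops

variable {L : ℕ} {η η' : ZMod L → ℕ} {k ℓ a : ZMod L}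

theorem move_apply_source : move L η k ℓ k = η k - 1 :=
  if_pos rfl

theorem move_apply_target (hkℓ : k ≠ ℓ) : move L η k ℓ ℓ = η ℓ + 1 := by
  simp only [move, if_neg hkℓ.symm, if_true]

theorem move_apply_of_ne (hk : a ≠ k) (hℓ : a ≠ ℓ) : move L η k ℓ a = η a := by
  simp only [move, if_neg hk, if_neg hℓ]

/-- The number of clear arcs (`0`, `1` or `2`) between the sites `k` and `ℓ`. An empty arc is
counted clockwise from whichever end it starts, which makes the symmetry in `k` and `ℓ` evident. -/
noncomputable def clearArcs (L : ℕ) (η : ZMod L → ℕ) (k ℓ : ZMod L) : ℝ :=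
  (if RightClear L η k ℓ then 1 else 0) + (if RightClear L η ℓ k then 1 else 0)

theorem clearArcs_comm : clearArcs L η k ℓ = clearArcs L η ℓ k :=
  add_comm _ _

variable [NeZero L]

theorem leftClear_iff_rightClear_swap : LeftClear L η k ℓ ↔ RightClear L η ℓ k := by
  have reflect {i : ℕ} (hi : i < (k - ℓ).val) :
      k - (((k - ℓ).val - i : ℕ) : ZMod L) = ℓ + i := by
    rw [Nat.cast_sub hi.le, ZMod.natCast_zmod_val]
    ring
  constructor
  · intro h i hi_pos hi
    rw [← reflect hi]
    exact h _ (by lia) (by lia)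
  · intro h i hi_pos hi
    have hi' : (k - ℓ).val - i < (k - ℓ).val := by lia
    have hempty := h _ (by lia) hi'
    rwa [← reflect hi', Nat.sub_sub_self hi.le] at hempty

theorem rightClear_congr (heq : ∀ a, a ≠ k → a ≠ ℓ → η' a = η a) :
    RightClear L η' k ℓ ↔ RightClear L η k ℓ := by
  refine forall₃_congr fun i hi_pos hi => ?_
  have hval : (i : ZMod L).val = i := ZMod.val_cast_of_lt (hi.trans (ZMod.val_lt _))
  rw [heq]
  · intro hk
    rw [add_eq_left.mp hk, ZMod.val_zero] at hval
    exact hi_pos.ne hval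
  · intro hℓ
    rw [← hℓ, add_sub_cancel_left, hval] at hi
    exact hi.false

theorem clearArcs_move : clearArcs L (move L η k ℓ) k ℓ = clearArcs L η k ℓ := by
  have hfwd : RightClear L (move L η k ℓ) k ℓ ↔ RightClear L η k ℓ :=
    rightClear_congr fun _ hk hℓ => move_apply_of_ne hk hℓ
  have hbwd : RightClear L (move L η k ℓ) ℓ k ↔ RightClear L η ℓ k :=
    rightClear_congr fun _ hℓ hk => move_apply_of_ne hk hℓ
  simp only [clearArcs, hfwd, hbwd]

theorem hopRate_one_eq_clearArcs_mul (u : ℕ → ℕ → ℝ) (x : ZMod L → ℝ) (hkℓ : k ≠ ℓ)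
    (hk : 1 ≤ η k) : hopRate L u x 1 η k ℓ = clearArcs L η k ℓ * (x ℓ * u (η k) (η ℓ)) := by
  simp only [hopRate, clearArcs, leftClear_iff_rightClear_swap, hkℓ, hk, ne_eq, not_false_eq_true,
    true_and, one_mul, add_mul, ite_mul, zero_mul]

end Hops

section Reversibility

variable {L : ℕ} [NeZero L] {u : ℕ → ℕ → ℝ} {x : ZMod L → ℝ} {q : ℝ}

/-- Detailed balance (reversibility): the probability currents of every hop and of its reversal
coincide. The total rates over both directions around the ring are compared. -/
def DetailedBalance (L : ℕ) (u : ℕ → ℕ → ℝ) (x : ZMod L → ℝ) (q : ℝ)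
    (π : (ZMod L → ℕ) → ℝ) : Prop :=
  ∀ (η : ZMod L → ℕ) (k ℓ : ZMod L), k ≠ ℓ → 1 ≤ η k →
    π (move L η k ℓ) * hopRate L u x q (move L η k ℓ) ℓ k = π η * hopRate L u x q η k ℓ

theorem DetailedBalance.isStationary {π : (ZMod L → ℕ) → ℝ} (h : DetailedBalance L u x q π)
    (N : ℕ) : IsStationary L N u x q π := by
  intro η _
  rw [inflow, Finset.sum_comm, outflow]
  refine Finset.sum_congr rfl fun k _ => Finset.sum_congr rfl fun ℓ _ => ?_
  split_ifs with hk
  · rcases eq_or_ne k ℓ with rfl | hkℓ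
    · simp [hopRate]
    · exact h η k ℓ hkℓ hk
  · simp [hopRate, hk]

/-- The one-site weights `w` balance each pair of opposite hops: the factor of the current due to a
hop from a site `k` with `a + 1` particles to a site `ℓ` with `b` particles equals that of the
reversed hop. -/
def PairBalance (u : ℕ → ℕ → ℝ) (x : ZMod L → ℝ) (w : ZMod L → ℕ → ℝ) : Prop :=
  ∀ (k ℓ : ZMod L) (a b : ℕ), k ≠ ℓ →
    w k a * w ℓ (b + 1) * (x k * u (b + 1) a) = w k (a + 1) * w ℓ b * (x ℓ * u (a + 1) b)

theorem PairBalance.detailedBalance {w : ZMod L → ℕ → ℝ} (h : PairBalance u x w) :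
    DetailedBalance L u x 1 (fun η => ∏ a, w a (η a)) := by
  intro η k ℓ hkℓ hk
  have prod_split (ξ : ZMod L → ℕ) :
      ∏ a, w a (ξ a) = w k (ξ k) * w ℓ (ξ ℓ) * ∏ a ∈ {k, ℓ}ᶜ, w a (ξ a) := by
    rw [← Finset.prod_pair (f := fun a => w a (ξ a)) hkℓ, Finset.prod_mul_prod_compl]
  have prod_rest : ∏ a ∈ {k, ℓ}ᶜ, w a (move L η k ℓ a) = ∏ a ∈ {k, ℓ}ᶜ, w a (η a) := by
    refine Finset.prod_congr rfl fun a ha => ?_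
    simp only [Finset.mem_compl, Finset.mem_insert, Finset.mem_singleton, not_or] at ha
    rw [move_apply_of_ne ha.1 ha.2]
  obtain ⟨m, hm⟩ : ∃ m, η k = m + 1 := Nat.exists_eq_add_of_le' hk
  have target_occupied : 1 ≤ move L η k ℓ ℓ := by
    rw [move_apply_target hkℓ]
    exact Nat.le_add_left 1 _
  simp only [prod_split, prod_rest]
  rw [hopRate_one_eq_clearArcs_mul u x hkℓ.symm target_occupied,
    hopRate_one_eq_clearArcs_mul u x hkℓ hk, clearArcs_comm, clearArcs_move, move_apply_source,
    move_apply_target hkℓ, hm, Nat.add_sub_cancel]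
  linear_combination (∏ a ∈ {k, ℓ}ᶜ, w a (η a)) * clearArcs L η k ℓ * h k ℓ m (η ℓ) hkℓ

end Reversibility

section Cocozza

variable {u : ℕ → ℕ → ℝ} {f : ℕ → ℝ} {c q : ℝ}

/-- The Cocozza-type condition on a rate function, under which the stationary distribution of the
symmetric process is factorised. -/
def CocozzaCondition (u : ℕ → ℕ → ℝ) : Prop :=
  ∀ m n : ℕ, 1 ≤ m → 1 ≤ n →
    u m n / (u m 0 * u 1 n) = u (n + 1) (m - 1) / (u (n + 1) 0 * u 1 (m - 1))

theorem CocozzaCondition.mul_eq_mul (h : CocozzaCondition u) (hu : ∀ m n, u (m + 1) n ≠ 0)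
    (a b : ℕ) :
    u (a + 1) b * (u (b + 1) 0 * u 1 a) = u (b + 1) a * (u (a + 1) 0 * u 1 b) := by
  rcases b.eq_zero_or_pos with rfl | hb
  · ring
  · exact (div_eq_div_iff (mul_ne_zero (hu a 0) (hu 0 b)) (mul_ne_zero (hu b 0) (hu 0 a))).mp
      (h (a + 1) b (Nat.le_add_left 1 a) hb)

theorem CocozzaCondition.weight_mul_eq (h : CocozzaCondition u) (hu : ∀ m n, u (m + 1) n ≠ 0)
    (hf : ∀ n, f (n + 1) * u (n + 1) 0 = c * (f n * u 1 n)) (a b : ℕ) :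
    f a * f (b + 1) * u (b + 1) a = f (a + 1) * f b * u (a + 1) b := by
  refine mul_right_cancel₀ (mul_ne_zero (hu a 0) (hu b 0)) ?_
  calc f a * f (b + 1) * u (b + 1) a * (u (a + 1) 0 * u (b + 1) 0)
      = f a * (f (b + 1) * u (b + 1) 0) * (u (b + 1) a * u (a + 1) 0) := by ring
    _ = c * f a * f b * (u (b + 1) a * (u (a + 1) 0 * u 1 b)) := by rw [hf]; ring
    _ = c * f a * f b * (u (a + 1) b * (u (b + 1) 0 * u 1 a)) := by rw [h.mul_eq_mul hu]
    _ = f b * (f (a + 1) * u (a + 1) 0) * (u (a + 1) b * u (b + 1) 0) := by rw [hf]; ring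
    _ = f (a + 1) * f b * u (a + 1) b * (u (a + 1) 0 * u (b + 1) 0) := by ring

theorem CocozzaCondition.factorisedPALRMP (h : CocozzaCondition u)
    (hu : ∀ m n, u (m + 1) n ≠ 0) (hf_pos : ∀ n, 0 < f n)
    (hf : ∀ n, f (n + 1) * u (n + 1) 0 = c * (f n * u 1 n)) :
    FactorisedPALRMP u 1 (fun x n => x ^ n * f n) := by
  refine ⟨fun x n hx => mul_pos (pow_pos hx n) (hf_pos n), fun L N _ _ _ x _ => ?_⟩
  have pair_balance : PairBalance u x fun ℓ n => x ℓ ^ n * f n := fun k ℓ a b _ => by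
    linear_combination x k ^ (a + 1) * x ℓ ^ (b + 1) * h.weight_mul_eq hu hf a b
  exact pair_balance.detailedBalance.isStationary N

theorem FactorisedPALRMP.factorisedHomog {g : ℝ → ℕ → ℝ} (h : FactorisedPALRMP u q g) :
    FactorisedHomog u q (g 1) :=
  ⟨fun n => h.1 1 n one_pos, fun L N _ hL hN => h.2 L N hL hN (fun _ => 1) fun _ => one_pos⟩

end Cocozza

section ProductRate

theorem cocozzaCondition_mul {φ ψ : ℕ → ℝ} (hφ : ∀ m, φ (m + 1) ≠ 0) (hψ : ∀ n, ψ n ≠ 0) :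
    CocozzaCondition fun m n => φ m * ψ n := by
  have ratio (m n : ℕ) :
      φ (m + 1) * ψ n / (φ (m + 1) * ψ 0 * (φ 1 * ψ n)) = 1 / (ψ 0 * φ 1) := by
    rw [← mul_div_mul_left 1 (ψ 0 * φ 1) (mul_ne_zero (hφ m) (hψ n))]
    ring
  intro m n hm _
  obtain ⟨m, rfl⟩ := Nat.exists_eq_add_of_le' hm
  exact (ratio m n).trans (ratio n m).symm

theorem prod_range_succ_div_mul {G₀ : Type*} [CommGroupWithZero G₀] (ψ φ : ℕ → G₀) {n : ℕ}
    (hφ : φ (n + 1) ≠ 0) :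
    (∏ i ∈ Finset.range (n + 1), ψ i / φ (i + 1)) * φ (n + 1) =
      (∏ i ∈ Finset.range n, ψ i / φ (i + 1)) * ψ n := by
  rw [Finset.prod_range_succ, mul_assoc, div_mul_cancel₀ _ hφ]

theorem hslrmp_product_rate_general (φ ψ : ℕ → ℝ) (hφ : ∀ m : ℕ, 1 ≤ m → 0 < φ m)
    (hψ : ∀ n : ℕ, 0 < ψ n) :
    CocozzaCondition (fun m n => φ m * ψ n) ∧
    FactorisedPALRMP (fun m n => φ m * ψ n) 1
      (fun x n => x ^ n * ∏ i ∈ Finset.range n, ψ i / φ (i + 1)) := by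
  have hφ_succ (m : ℕ) : 0 < φ (m + 1) := hφ _ (Nat.le_add_left 1 m)
  have cocozza : CocozzaCondition fun m n => φ m * ψ n :=
    cocozzaCondition_mul (fun m => (hφ_succ m).ne') fun n => (hψ n).ne'
  refine ⟨cocozza, cocozza.factorisedPALRMP (c := ψ 0 / φ 1)
    (fun m n => (mul_pos (hφ_succ m) (hψ n)).ne')
    (fun n => Finset.prod_pos fun i _ => div_pos (hψ i) (hφ_succ i)) fun n => ?_⟩
  have hφ_one : φ 1 ≠ 0 := (hφ_succ 0).ne'
  rw [← mul_assoc, prod_range_succ_div_mul ψ φ (hφ_succ n).ne']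
  field_simp

end ProductRate

/-- for `u (m, n) = φ m * ψ n` with `φ 0 = 0`, `φ` positive on `m ≥ 1`
and `ψ` positive, the Cocozza-type condition holds and the stationary distribution
corresponding to `u` in the homogeneous SLRMP is factorised with one-point function
`f n = ∏_{i=1}^{n} (ψ (i-1) / φ i)`. -/
theorem hslrmp_product_rate
    (φ ψ : ℕ → ℝ) (hφ0 : φ 0 = 0)
    (hφ : ∀ m : ℕ, 1 ≤ m → 0 < φ m) (hψ : ∀ n : ℕ, 0 < ψ n) :
    (∀ m n : ℕ, 1 ≤ m → 1 ≤ n →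
      φ m * ψ n / (φ m * ψ 0 * (φ 1 * ψ n)) =
        φ (n + 1) * ψ (m - 1) / (φ (n + 1) * ψ 0 * (φ 1 * ψ (m - 1)))) ∧
    FactorisedHomog (fun m n => φ m * ψ n) 1
      (fun n => ∏ i ∈ Finset.range n, ψ i / φ (i + 1)) := by
  obtain ⟨cocozza, factorised⟩ := hslrmp_product_rate_general φ ψ hφ hψ
  exact ⟨cocozza, by simpa using factorised.factorisedHomog⟩

end LRMP
end
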